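/- (Lemma 3.1) Let n ≥ 1 and let F = (F₁, F₂, F₃) : ℝ^{2n+1} → ℝ^{2n+1} be a real-analytic map, with F₁ = (F₁₁, …, F₁ₙ), F₂ scalar-valued, F₃ = (F₃₁, …, F₃ₙ), such that the transform 𝒯(Φ) = F ∘ Φ maps GX into GX, satisfies 𝒯(𝒯(Φ)) = Φ for all Φ ∈ GX, fixes every Φ ∈ GY, and moves every Φ ∈ GX ∖ GY. Then for every i ∈ {1, …, n} there exist real constants pᵢ, pᵢ', qᵢ, qᵢ' such that, writing the coordinates of ℝ^{2n+1} as (X₁, …, Xₙ, Y, Z₁, …, Zₙ), one has F₁ᵢ(X, Y, Z) = pᵢ Xᵢ + pᵢ' Zᵢ and F₃ᵢ(X, Y, Z) = qᵢ Xᵢ + qᵢ' Zᵢ identically on ℝ^{2n+1}. -/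

import Mathlib

open scoped BigOperators

/-- Triples `(θ, a, b)` encoding maps `ℝⁿ → ℝ^{2n+1}`. -/
abbrev TripleMap (n : ℕ) :=
  ((Fin n → ℝ) → Fin n → ℝ) × ((Fin n → ℝ) → ℝ) × ((Fin n → ℝ) → Fin n → ℝ)

/-- All three components are `C^∞`. -/
def SmoothTriple (n : ℕ) (Φ : TripleMap n) : Prop :=
  ContDiff ℝ (⊤ : ℕ∞) Φ.1 ∧ ContDiff ℝ (⊤ : ℕ∞) Φ.2.1 ∧ ContDiff ℝ (⊤ : ℕ∞) Φ.2.2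

/-- The creative condition (*): `da = ∑ᵢ bᵢ dθᵢ`. -/
def Creative (n : ℕ) (Φ : TripleMap n) : Prop :=
  ∀ x v : Fin n → ℝ,
    fderiv ℝ Φ.2.1 x v = ∑ i, Φ.2.2 x i * fderiv ℝ (fun y => Φ.1 y i) x v

/-- `RegPts f` is the set of regular points of `f : ℝⁿ → ℝⁿ`, i.e. points where
the differential is invertible. -/
def RegPts (n : ℕ) (f : (Fin n → ℝ) → Fin n → ℝ) : Set (Fin n → ℝ) :=
  {x | Function.Bijective (fderiv ℝ f x)}

/-- `X`: smooth triples satisfying the creative condition. -/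
def Xset (n : ℕ) : Set (TripleMap n) := {Φ | SmoothTriple n Φ ∧ Creative n Φ}

/-- `GX`: elements of `X` such that `Reg θ` and `Reg b` are dense. -/
def GXset (n : ℕ) : Set (TripleMap n) :=
  {Φ | SmoothTriple n Φ ∧ Creative n Φ ∧ Dense (RegPts n Φ.1) ∧ Dense (RegPts n Φ.2.2)}

/-- `Y`: triples of the form `(θ, ½∑θᵢ², θ)` with `θ` smooth. -/
def Yset (n : ℕ) : Set (TripleMap n) :=
  {Φ | ∃ θ : (Fin n → ℝ) → Fin n → ℝ, ContDiff ℝ (⊤ : ℕ∞) θ ∧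
    Φ = (θ, fun x => (1 / 2) * ∑ i, θ x i ^ 2, θ)}

/-- `GY`: triples of the form `(θ, ½∑θᵢ², θ)` with `θ` smooth and `Reg θ` dense. -/
def GYset (n : ℕ) : Set (TripleMap n) :=
  {Φ | ∃ θ : (Fin n → ℝ) → Fin n → ℝ, ContDiff ℝ (⊤ : ℕ∞) θ ∧ Dense (RegPts n θ) ∧
    Φ = (θ, fun x => (1 / 2) * ∑ i, θ x i ^ 2, θ)}

/-- The Legendre involution `L(θ, a, b) = (b, ∑ᵢ bᵢθᵢ − a, θ)`. -/
def Legendre (n : ℕ) (Φ : TripleMap n) : TripleMap n :=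
  (Φ.2.2, fun x => (∑ i, Φ.2.2 x i * Φ.1 x i) - Φ.2.1 x, Φ.1)

/-- Packing a triple `(θ, a, b)` into a single map `ℝⁿ → ℝ^{2n+1}`
(realized as `ℝⁿ × ℝ × ℝⁿ`). -/
def packTriple (n : ℕ) (Φ : TripleMap n) : (Fin n → ℝ) → (Fin n → ℝ) × ℝ × (Fin n → ℝ) :=
  fun x => (Φ.1 x, Φ.2.1 x, Φ.2.2 x)

/-- Unpacking a map `ℝⁿ → ℝ^{2n+1}` into a triple `(θ, a, b)`. -/
def unpackTriple (n : ℕ) (Ψ : (Fin n → ℝ) → (Fin n → ℝ) × ℝ × (Fin n → ℝ)) : TripleMap n :=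
  (fun x => (Ψ x).1, fun x => (Ψ x).2.1, fun x => (Ψ x).2.2)

/-! Elements of `GX` are Legendrian for `dY = ∑ᵢ Zᵢ dXᵢ`, and quadratic ones pass through every
point with enough tangent directions to force `F` to be a contact involution. Membership in `GX` also
records transversality to the horizontal and the vertical directions. Hence a horizontal or vertical
vector cannot be sent to a vector with both components nonzero: such a vector is tangent to the
graph of a symmetric isomorphism, which `F` would send back to a transverse plane. By linearity and
connectedness, `F` sends all vertical vectors to vertical ones, or all of them to horizontal ones.

In the first case `F₁` does not depend on `Z`. It does not depend on `Y` either, for otherwise a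
suitable choice of `Z` would make its differential degenerate along horizontal vectors. So `F₁` is
determined by its values `F₁ = X` on the points `(x, ½|x|², x)` fixed by `F`. The Legendre
transformation gives `F₃ = Z`, and likewise `F₁ = Z`, `F₃ = X` in the second case. -/

open Matrix

section Calculus

variable {E G : Type*} [NormedAddCommGroup E] [NormedSpace ℝ E]
  [NormedAddCommGroup G] [NormedSpace ℝ G]

theorem fderiv_dotProduct_apply {ι : Type*} [Fintype ι] {f g : E → ι → ℝ} {x : E}
    (hf : DifferentiableAt ℝ f x) (hg : DifferentiableAt ℝ g x) (v : E) :
    fderiv ℝ (fun y => f y ⬝ᵥ g y) x v = fderiv ℝ f x v ⬝ᵥ g x + f x ⬝ᵥ fderiv ℝ g x v := by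
  have hfi := differentiableAt_pi.1 hf
  have hgi := differentiableAt_pi.1 hg
  simp only [dotProduct, ← Finset.sum_add_distrib]
  rw [fderiv_fun_sum fun i _ => (hfi i).fun_mul (hgi i), _root_.sum_apply]
  refine Finset.sum_congr rfl fun i _ => ?_
  rw [fderiv_fun_mul (hfi i) (hgi i), fderiv_apply hf, fderiv_apply hg]
  simp only [_root_.add_apply, _root_.smul_apply, ContinuousLinearMap.comp_apply,
    ContinuousLinearMap.proj_apply, smul_eq_mul]
  ring

theorem fderiv_fderiv_apply_comm {f : E → G} (hf : ContDiff ℝ 2 f) (x u v : E) :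
    fderiv ℝ (fun y => fderiv ℝ f y v) x u = fderiv ℝ (fun y => fderiv ℝ f y u) x v := by
  have hd : DifferentiableAt ℝ (fderiv ℝ f) x :=
    (hf.fderiv_right (m := 1) le_rfl).differentiable one_ne_zero x
  have hsymm : IsSymmSndFDerivAt ℝ f x := hf.contDiffAt.isSymmSndFDerivAt (by simp)
  rw [fderiv_clm_apply hd (differentiableAt_const v),
    fderiv_clm_apply hd (differentiableAt_const u)]
  simpa using hsymm.eq u v

theorem apply_add_eq_of_fderiv_eq_zero {f : E → G} (hf : Differentiable ℝ f) {p d : E}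
    (h : ∀ t : ℝ, fderiv ℝ f (p + t • d) d = 0) : f (p + d) = f p := by
  have hline (t : ℝ) : HasDerivAt (fun t : ℝ => f (p + t • d)) 0 t := by
    have hd : HasDerivAt (fun t : ℝ => p + t • d) d t := by
      simpa using ((hasDerivAt_id t).smul_const d).const_add p
    rw [← h t]
    exact (hf (p + t • d)).hasFDerivAt.comp_hasDerivAt t hd
  simpa using is_const_of_deriv_eq_zero (fun t => (hline t).differentiableAt)
    (fun t => (hline t).deriv) 1 0

theorem fderiv_fderiv_of_involutive {f : E → E} (h : Function.Involutive f)
    (hf : Differentiable ℝ f) (p d : E) : fderiv ℝ f (f p) (fderiv ℝ f p d) = d := by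
  have hcomp := (hf (f p)).hasFDerivAt.comp p (hf p).hasFDerivAt
  rw [h.comp_self] at hcomp
  exact DFunLike.congr_fun (hcomp.unique (hasFDerivAt_id p)) d

theorem exists_contDiff_mem_nhds_bijective_fderiv {ι : Type*} [Fintype ι] {x₀ : ι → ℝ}
    {U : Set (ι → ℝ)} (hU : U ∈ nhds x₀) :
    ∃ h : (ι → ℝ) → ι → ℝ, ContDiff ℝ (⊤ : ℕ∞) h ∧ (∀ x, h x ∈ U) ∧
      ∀ x, Function.Bijective (fderiv ℝ h x) := by
  obtain ⟨ε, hε, hball⟩ := Metric.mem_nhds_iff.1 hU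
  have hderiv (x : ι → ℝ) : HasFDerivAt (fun (x : ι → ℝ) i => x₀ i + ε / 2 * Real.arctan (x i))
      (ContinuousLinearMap.pi fun i => (ε / 2 * (1 / (1 + x i ^ 2))) •
        ContinuousLinearMap.proj (R := ℝ) (φ := fun _ : ι => ℝ) i) x := by
    refine hasFDerivAt_pi.2 fun i => ?_
    rw [← smul_smul]
    exact (((hasFDerivAt_apply i x).arctan).const_mul (ε / 2)).const_add (x₀ i)
  refine ⟨fun x i => x₀ i + ε / 2 * Real.arctan (x i), ?_, fun x => hball ?_, fun x => ?_⟩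
  · have h := Real.contDiff_arctan (n := (⊤ : ℕ∞))
    fun_prop
  · rw [Metric.mem_ball, dist_pi_lt_iff hε]
    intro i
    rw [Real.dist_eq, add_sub_cancel_left, abs_mul, abs_of_pos (half_pos hε)]
    have harctan : |Real.arctan (x i)| < 2 :=
      abs_lt.2 ⟨by linarith [Real.neg_pi_div_two_lt_arctan (x i), Real.pi_lt_four],
        by linarith [Real.arctan_lt_pi_div_two (x i), Real.pi_lt_four]⟩
    nlinarith
  · rw [(hderiv x).fderiv]
    have hne (i : ι) : ε / 2 * (1 / (1 + x i ^ 2)) ≠ 0 := by positivity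
    exact Function.Bijective.piMap fun i => mulLeft_bijective₀ _ (hne i)

end Calculus

theorem exists_isSymmetric_apply_eq {E : Type*} [NormedAddCommGroup E] [InnerProductSpace ℝ E]
    {u u' : E} (hu : u ≠ 0) (hu' : u' ≠ 0) :
    ∃ S : E ≃L[ℝ] E, (S : E →ₗ[ℝ] E).IsSymmetric ∧ S u = u' := by
  set c : ℝ := ‖u'‖ / ‖u‖
  have hc : c ≠ 0 := div_ne_zero (norm_ne_zero_iff.2 hu') (norm_ne_zero_iff.2 hu)
  have hnorm : ‖u‖ = ‖c⁻¹ • u'‖ := by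
    rw [norm_smul, norm_inv, norm_div, norm_norm, norm_norm, inv_div,
      div_mul_cancel₀ _ (norm_ne_zero_iff.2 hu')]
  let R := (ℝ ∙ (u - c⁻¹ • u'))ᗮ.reflection
  refine ⟨R.toContinuousLinearEquiv.trans (ContinuousLinearEquiv.smulLeft (Units.mk0 c hc)),
    fun x y => ?_, ?_⟩
  · have hR : inner ℝ (R x) y = inner ℝ x (R y) := by
      rw [← R.inner_map_map (R x) y, Submodule.reflection_reflection]
    change inner ℝ (c • R x) y = inner ℝ x (c • R y)
    rw [real_inner_smul_left, real_inner_smul_right, hR]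
  · change c • R u = u'
    rw [Submodule.reflection_sub hnorm, smul_inv_smul₀ hc]

theorem exists_dotProduct_symmetric_apply_eq {ι : Type*} [Fintype ι] {u u' : ι → ℝ}
    (hu : u ≠ 0) (hu' : u' ≠ 0) :
    ∃ S : (ι → ℝ) →L[ℝ] (ι → ℝ), (∀ x y, S x ⬝ᵥ y = S y ⬝ᵥ x) ∧
      Function.Bijective S ∧ S u = u' := by
  let e := EuclideanSpace.equiv ι ℝ
  obtain ⟨S, hS, hSu⟩ := exists_isSymmetric_apply_eq (u := e.symm u) (u' := e.symm u')
    (by simpa using hu) (by simpa using hu')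
  refine ⟨((e.symm.trans S).trans e : (ι → ℝ) ≃L[ℝ] (ι → ℝ)), fun x y => ?_,
    ((e.symm.trans S).trans e).bijective, by simp [hSu]⟩
  have h := hS (e.symm x) (e.symm y)
  rw [EuclideanSpace.inner_eq_star_dotProduct, EuclideanSpace.inner_eq_star_dotProduct] at h
  exact (dotProduct_comm _ _).trans h

theorem eq_zero_or_eq_zero_of_forall_apply_eq_zero {R M N : Type*} [Semiring R] [AddCommMonoid M]
    [Module R M] [AddCommMonoid N] [Module R N] (f g : M →ₗ[R] N) (h : ∀ x, f x = 0 ∨ g x = 0) :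
    f = 0 ∨ g = 0 := by
  by_contra! hne
  obtain ⟨x, hfx⟩ := DFunLike.ne_iff.1 hne.1
  obtain ⟨y, hgy⟩ := DFunLike.ne_iff.1 hne.2
  have hgx : g x = 0 := (h x).resolve_left hfx
  have hfy : f y = 0 := (h y).resolve_right hgy
  rcases h (x + y) with h | h
  · exact hfx (by simpa [hfy] using h)
  · exact hgy (by simpa [hgx] using h)

section RegPts

variable {n : ℕ} {f h : (Fin n → ℝ) → Fin n → ℝ}

theorem isOpen_regPts (hf : ContDiff ℝ 1 f) : IsOpen (RegPts n f) := by
  have hpre : RegPts n f = fderiv ℝ f ⁻¹' {L | IsUnit L} := by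
    ext x
    exact ContinuousLinearMap.isUnit_iff_bijective.symm
  rw [hpre]
  exact Units.isOpen.preimage (hf.continuous_fderiv one_ne_zero)

theorem mem_regPts_comp_iff {x : Fin n → ℝ} (hf : DifferentiableAt ℝ f (h x))
    (hh : DifferentiableAt ℝ h x) (hx : x ∈ RegPts n h) :
    x ∈ RegPts n (f ∘ h) ↔ h x ∈ RegPts n f := by
  have hbij : Function.Bijective (fderiv ℝ h x) := hx
  change Function.Bijective (fderiv ℝ (f ∘ h) x) ↔ _
  rw [fderiv_comp x hf hh]
  exact Function.Bijective.of_comp_iff _ hbij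

end RegPts

section Contact

/-- The space `ℝ^{2n+1}` of points `(X, Y, Z)`, thought of as the `1`-jets of functions on `ℝⁿ`:
`X` is the point, `Y` the value and `Z` the gradient. -/
abbrev JetSpace (n : ℕ) := (Fin n → ℝ) × ℝ × (Fin n → ℝ)

variable {n : ℕ}

/-- The contact hyperplane `dY = ∑ᵢ Zᵢ dXᵢ` at `p = (X, Y, Z)`. -/
def contactPlane (p : JetSpace n) : Submodule ℝ (JetSpace n) where
  carrier := {d | d.2.1 = p.2.2 ⬝ᵥ d.1}
  zero_mem' := by simp
  add_mem' ha hb := by simp_all [dotProduct_add]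
  smul_mem' c d hd := by simp_all [dotProduct_smul]

theorem mem_contactPlane {p d : JetSpace n} : d ∈ contactPlane p ↔ d.2.1 = p.2.2 ⬝ᵥ d.1 := Iff.rfl

/-- The linear parametrization of the contact hyperplane at `p` by its `X`- and `Z`-components.
The images of `(v, 0)` and `(0, w)` are called horizontal and vertical. -/
def contactLift (p : JetSpace n) : (Fin n → ℝ) × (Fin n → ℝ) →ₗ[ℝ] JetSpace n where
  toFun c := (c.1, p.2.2 ⬝ᵥ c.1, c.2)
  map_add' a b := by simp [dotProduct_add]
  map_smul' r a := by simp [dotProduct_smul]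

theorem contactLift_apply (p : JetSpace n) (c : (Fin n → ℝ) × (Fin n → ℝ)) :
    contactLift p c = (c.1, p.2.2 ⬝ᵥ c.1, c.2) := rfl

theorem contactLift_mem_contactPlane (p : JetSpace n) (c : (Fin n → ℝ) × (Fin n → ℝ)) :
    contactLift p c ∈ contactPlane p := rfl

theorem contactLift_of_mem_contactPlane {p d : JetSpace n} (hd : d ∈ contactPlane p) :
    contactLift p (d.1, d.2.2) = d := Prod.ext rfl (Prod.ext hd.symm rfl)

/-- A map between jet spaces whose differential maps contact hyperplanes to contact
hyperplanes. -/
def IsContact (F : JetSpace n → JetSpace n) : Prop :=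
  ∀ p, ∀ d ∈ contactPlane p, fderiv ℝ F p d ∈ contactPlane (F p)

/-- The differential of `F` on contact hyperplanes, read in the coordinates of `contactLift`.
The `Y`-component of the image is dropped, so this is only meaningful for contact maps `F`. -/
noncomputable def contactFDeriv (F : JetSpace n → JetSpace n) (p : JetSpace n) :
    (Fin n → ℝ) × (Fin n → ℝ) →ₗ[ℝ] (Fin n → ℝ) × (Fin n → ℝ) :=
  (LinearMap.fst ℝ _ _).prod (LinearMap.snd ℝ _ _ ∘ₗ LinearMap.snd ℝ _ _) ∘ₗ
    (fderiv ℝ F p : JetSpace n →ₗ[ℝ] JetSpace n) ∘ₗ contactLift p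

variable {F : JetSpace n → JetSpace n}

theorem contactFDeriv_apply (p : JetSpace n) (c : (Fin n → ℝ) × (Fin n → ℝ)) :
    contactFDeriv F p c
      = ((fderiv ℝ F p (contactLift p c)).1, (fderiv ℝ F p (contactLift p c)).2.2) := rfl

theorem IsContact.fderiv_contactLift (hF : IsContact F) (p : JetSpace n)
    (c : (Fin n → ℝ) × (Fin n → ℝ)) :
    fderiv ℝ F p (contactLift p c) = contactLift (F p) (contactFDeriv F p c) :=
  (contactLift_of_mem_contactPlane (hF p _ (contactLift_mem_contactPlane p c))).symm

theorem IsContact.contactFDeriv_contactFDeriv (hF : IsContact F) (hinv : Function.Involutive F)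
    (hd : Differentiable ℝ F) (p : JetSpace n) (c : (Fin n → ℝ) × (Fin n → ℝ)) :
    contactFDeriv F (F p) (contactFDeriv F p c) = c := by
  rw [contactFDeriv_apply, ← hF.fderiv_contactLift, fderiv_fderiv_of_involutive hinv hd]
  rfl

theorem fderiv_fst_contactLift (hd : Differentiable ℝ F) (p : JetSpace n)
    (c : (Fin n → ℝ) × (Fin n → ℝ)) :
    fderiv ℝ (fun q => (F q).1) p (contactLift p c) = (contactFDeriv F p c).1 := by
  rw [(hd p).hasFDerivAt.fst.fderiv]
  rfl

theorem fderiv_snd_snd_contactLift (hd : Differentiable ℝ F) (p : JetSpace n)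
    (c : (Fin n → ℝ) × (Fin n → ℝ)) :
    fderiv ℝ (fun q => (F q).2.2) p (contactLift p c) = (contactFDeriv F p c).2 := by
  rw [(hd p).hasFDerivAt.snd.snd.fderiv]
  rfl

/-- The map of the jet space inducing the involution `Legendre` on triples; it exchanges horizontal
and vertical vectors. -/
def legendreMap (p : JetSpace n) : JetSpace n := (p.2.2, p.2.2 ⬝ᵥ p.1 - p.2.1, p.1)

theorem legendreMap_involutive : Function.Involutive (legendreMap (n := n)) := fun p => by
  simp [legendreMap, dotProduct_comm]

theorem differentiable_legendreMap : Differentiable ℝ (legendreMap (n := n)) := by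
  unfold legendreMap dotProduct
  fun_prop

theorem fderiv_legendreMap_contactLift (p : JetSpace n) (v w : Fin n → ℝ) :
    fderiv ℝ legendreMap p (contactLift p (v, w)) = contactLift (legendreMap p) (w, v) := by
  have hX : HasFDerivAt (fun q : JetSpace n => q.1) (.fst ℝ _ _) p := hasFDerivAt_fst
  have hY : HasFDerivAt (fun q : JetSpace n => q.2.1) (.comp (.fst ℝ _ _) (.snd ℝ _ _)) p :=
    hasFDerivAt_snd.fst
  have hZ : HasFDerivAt (fun q : JetSpace n => q.2.2) (.comp (.snd ℝ _ _) (.snd ℝ _ _)) p :=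
    hasFDerivAt_snd.snd
  have hZX : DifferentiableAt ℝ (fun q : JetSpace n => q.2.2 ⬝ᵥ q.1) p := by
    unfold dotProduct
    fun_prop
  have hderiv : HasFDerivAt legendreMap _ p := hZ.prodMk ((hZX.hasFDerivAt.sub hY).prodMk hX)
  have hvalue : fderiv ℝ (fun q : JetSpace n => q.2.2 ⬝ᵥ q.1) p (contactLift p (v, w))
      = w ⬝ᵥ p.1 + p.2.2 ⬝ᵥ v := by
    rw [fderiv_dotProduct_apply hZ.differentiableAt hX.differentiableAt, hZ.fderiv, hX.fderiv]
    rfl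
  have hY' : fderiv ℝ (fun q : JetSpace n => q.2.2 ⬝ᵥ q.1) p (contactLift p (v, w))
      - p.2.2 ⬝ᵥ v = p.1 ⬝ᵥ w := by
    rw [hvalue, add_sub_cancel_right, dotProduct_comm]
  rw [hderiv.fderiv]
  exact Prod.ext rfl (Prod.ext hY' rfl)

/-- Independence of `Z` gives `fderiv f (X, Y, Z) (v, Z ⬝ᵥ v, 0) = A v + (Z ⬝ᵥ v) • κ` with `A` and
`κ = ∂f/∂Y` not depending on `Z`. -/
theorem fderiv_zero_one_zero_eq_zero {f : JetSpace n → Fin n → ℝ} (hf : Differentiable ℝ f)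
    (hvert : ∀ p w, fderiv ℝ f p (contactLift p (0, w)) = 0)
    (hhor : ∀ p v, fderiv ℝ f p (contactLift p (v, 0)) = 0 → v = 0) (p : JetSpace n) :
    fderiv ℝ f p (0, 1, 0) = 0 := by
  by_contra hne
  let A : (Fin n → ℝ) →ₗ[ℝ] (Fin n → ℝ) :=
    (fderiv ℝ f p : JetSpace n →ₗ[ℝ] _) ∘ₗ contactLift p ∘ₗ LinearMap.inl ℝ _ _
  have hA : Function.Injective A := (injective_iff_map_eq_zero A).2 (hhor p)
  obtain ⟨v, hv : fderiv ℝ f p (contactLift p (v, 0)) = fderiv ℝ f p (0, 1, 0)⟩ :=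
    LinearMap.injective_iff_surjective.1 hA (fderiv ℝ f p (0, 1, 0))
  have hv0 : v ≠ 0 := by
    rintro rfl
    exact hne (by rw [← hv, Prod.mk_zero_zero, map_zero, map_zero])
  let ζ : Fin n → ℝ := -(v ⬝ᵥ v)⁻¹ • v
  have hζ : ζ ⬝ᵥ v = -1 := by
    have hvv : v ⬝ᵥ v ≠ 0 := fun h => hv0 (dotProduct_self_eq_zero.1 h)
    simp [ζ, smul_dotProduct, inv_mul_cancel₀ hvv]
  have htranslate : fderiv ℝ f (p + (0, 0, ζ)) = fderiv ℝ f p := by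
    have hconst (q : JetSpace n) : f (q + (0, 0, ζ)) = f q :=
      apply_add_eq_of_fderiv_eq_zero hf fun t => by
        simpa only [contactLift_apply, dotProduct_zero] using hvert (q + t • (0, 0, ζ)) ζ
    rw [← fderiv_comp_add_right]
    simp only [hconst]
  refine hv0 (hhor (p + (0, 0, ζ)) v ?_)
  have hsplit : contactLift (p + (0, 0, ζ)) (v, 0) = contactLift p (v, 0) - (0, 1, 0) := by
    simp [contactLift_apply, add_dotProduct, hζ, sub_eq_add_neg]
  rw [htranslate, hsplit, map_sub, hv, sub_self]

theorem eq_fst_of_fderiv_vertical_eq_zero {f : JetSpace n → Fin n → ℝ} (hf : Differentiable ℝ f)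
    (hvert : ∀ p w, fderiv ℝ f p (contactLift p (0, w)) = 0)
    (hhor : ∀ p v, fderiv ℝ f p (contactLift p (v, 0)) = 0 → v = 0)
    (hdiag : ∀ x : Fin n → ℝ, f (x, 1 / 2 * (x ⬝ᵥ x), x) = x) (p : JetSpace n) : f p = p.1 := by
  have hfiber (q : JetSpace n) (s : ℝ) (w : Fin n → ℝ) : fderiv ℝ f q (0, s, w) = 0 := by
    have hsplit : ((0, s, w) : JetSpace n) = contactLift q (0, w) + s • (0, 1, 0) := by
      simp [contactLift_apply]
    rw [hsplit, map_add, map_smul, hvert, fderiv_zero_one_zero_eq_zero hf hvert hhor, smul_zero,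
      add_zero]
  have hdecomp : p = (p.1, 1 / 2 * (p.1 ⬝ᵥ p.1), p.1) +
      (0, p.2.1 - 1 / 2 * (p.1 ⬝ᵥ p.1), p.2.2 - p.1) := by
    ext <;> simp
  conv_lhs => rw [hdecomp]
  rw [apply_add_eq_of_fderiv_eq_zero hf fun t => hfiber _ _ _, hdiag]

theorem eq_snd_snd_of_fderiv_horizontal_eq_zero {f : JetSpace n → Fin n → ℝ}
    (hf : Differentiable ℝ f)
    (hhor : ∀ p v, fderiv ℝ f p (contactLift p (v, 0)) = 0)
    (hvert : ∀ p w, fderiv ℝ f p (contactLift p (0, w)) = 0 → w = 0)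
    (hdiag : ∀ x : Fin n → ℝ, f (x, 1 / 2 * (x ⬝ᵥ x), x) = x) (p : JetSpace n) :
    f p = p.2.2 := by
  have hderiv (q : JetSpace n) (v w : Fin n → ℝ) :
      fderiv ℝ (f ∘ legendreMap) q (contactLift q (v, w))
        = fderiv ℝ f (legendreMap q) (contactLift (legendreMap q) (w, v)) := by
    rw [fderiv_comp q (hf _) (differentiable_legendreMap q), ContinuousLinearMap.comp_apply,
      fderiv_legendreMap_contactLift]
  have hdiag' (x : Fin n → ℝ) : (f ∘ legendreMap) (x, 1 / 2 * (x ⬝ᵥ x), x) = x := by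
    have hfixed : legendreMap (x, 1 / 2 * (x ⬝ᵥ x), x) = (x, 1 / 2 * (x ⬝ᵥ x), x) := by
      have hvalue : x ⬝ᵥ x - 1 / 2 * (x ⬝ᵥ x) = 1 / 2 * (x ⬝ᵥ x) := by ring
      exact Prod.ext rfl (Prod.ext hvalue rfl)
    rw [Function.comp_apply, hfixed, hdiag]
  have heq := eq_fst_of_fderiv_vertical_eq_zero (hf.comp differentiable_legendreMap)
    (fun q w => by rw [hderiv, hhor]) (fun q v hv => hvert _ v (by rwa [hderiv] at hv)) hdiag'
    (legendreMap p)
  rwa [Function.comp_apply, legendreMap_involutive p] at heq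

end Contact

section Legendrian

variable {n : ℕ} {Φ : TripleMap n}

theorem smoothTriple_iff_contDiff_packTriple :
    SmoothTriple n Φ ↔ ContDiff ℝ (⊤ : ℕ∞) (packTriple n Φ) :=
  ⟨fun h => h.1.prodMk (h.2.1.prodMk h.2.2), fun h => ⟨h.fst, h.snd.fst, h.snd.snd⟩⟩

theorem fderiv_packTriple_apply (h : SmoothTriple n Φ) (x v : Fin n → ℝ) :
    fderiv ℝ (packTriple n Φ) x v = (fderiv ℝ Φ.1 x v, fderiv ℝ Φ.2.1 x v, fderiv ℝ Φ.2.2 x v) := by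
  have hθ : DifferentiableAt ℝ Φ.1 x := h.1.differentiable (by simp) x
  have ha : DifferentiableAt ℝ Φ.2.1 x := h.2.1.differentiable (by simp) x
  have hb : DifferentiableAt ℝ Φ.2.2 x := h.2.2.differentiable (by simp) x
  have hpack : HasFDerivAt (packTriple n Φ) _ x :=
    hθ.hasFDerivAt.prodMk (ha.hasFDerivAt.prodMk hb.hasFDerivAt)
  rw [hpack.fderiv]
  rfl

theorem creative_iff_fderiv_eq_dotProduct (h : SmoothTriple n Φ) :
    Creative n Φ ↔ ∀ x v, fderiv ℝ Φ.2.1 x v = Φ.2.2 x ⬝ᵥ fderiv ℝ Φ.1 x v := by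
  have hθ : Differentiable ℝ Φ.1 := h.1.differentiable (by simp)
  refine forall₂_congr fun x v => ?_
  simp only [dotProduct, fderiv_apply (hθ x), ContinuousLinearMap.comp_apply,
    ContinuousLinearMap.proj_apply]

theorem creative_iff_fderiv_packTriple_mem_contactPlane (h : SmoothTriple n Φ) :
    Creative n Φ ↔ ∀ x v, fderiv ℝ (packTriple n Φ) x v ∈ contactPlane (packTriple n Φ x) := by
  simp only [creative_iff_fderiv_eq_dotProduct h, mem_contactPlane, fderiv_packTriple_apply h,
    packTriple]

theorem Creative.fderiv_packTriple_eq_contactLift (hc : Creative n Φ) (h : SmoothTriple n Φ)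
    (x v : Fin n → ℝ) : fderiv ℝ (packTriple n Φ) x v
      = contactLift (packTriple n Φ x) (fderiv ℝ Φ.1 x v, fderiv ℝ Φ.2.2 x v) := by
  rw [← contactLift_of_mem_contactPlane
    ((creative_iff_fderiv_packTriple_mem_contactPlane h).1 hc x v), fderiv_packTriple_apply h]

theorem Creative.fderiv_dotProduct_fderiv_comm (hc : Creative n Φ) (h : SmoothTriple n Φ)
    (x u v : Fin n → ℝ) :
    fderiv ℝ Φ.2.2 x u ⬝ᵥ fderiv ℝ Φ.1 x v = fderiv ℝ Φ.2.2 x v ⬝ᵥ fderiv ℝ Φ.1 x u := by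
  have htwo : (2 : WithTop ℕ∞) ≤ (⊤ : ℕ∞) := WithTop.coe_le_coe.2 le_top
  have hθ (v : Fin n → ℝ) : Differentiable ℝ fun y => fderiv ℝ Φ.1 y v :=
    (((h.1.of_le htwo).fderiv_right (m := 1) le_rfl).clm_apply contDiff_const).differentiable
      one_ne_zero
  have hderiv (u v : Fin n → ℝ) : fderiv ℝ (fun y => fderiv ℝ Φ.2.1 y v) x u
      = fderiv ℝ Φ.2.2 x u ⬝ᵥ fderiv ℝ Φ.1 x v
        + Φ.2.2 x ⬝ᵥ fderiv ℝ (fun y => fderiv ℝ Φ.1 y v) x u := by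
    simp only [(creative_iff_fderiv_eq_dotProduct h).1 hc]
    exact fderiv_dotProduct_apply (h.2.2.differentiable (by simp) x) (hθ v x) u
  have hsymm := fderiv_fderiv_apply_comm (h.2.1.of_le htwo) x u v
  rw [hderiv, hderiv, fderiv_fderiv_apply_comm (h.1.of_le htwo) x u v] at hsymm
  exact add_right_cancel hsymm

/-- The triple `Φ ∘ h`, obtained from `Φ` by the change of variables `h`. -/
def reparam (Φ : TripleMap n) (h : (Fin n → ℝ) → Fin n → ℝ) : TripleMap n :=
  unpackTriple n (packTriple n Φ ∘ h)

theorem SmoothTriple.reparam (hΦ : SmoothTriple n Φ) {h : (Fin n → ℝ) → Fin n → ℝ}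
    (hh : ContDiff ℝ (⊤ : ℕ∞) h) : SmoothTriple n (reparam Φ h) :=
  ⟨hΦ.1.comp hh, hΦ.2.1.comp hh, hΦ.2.2.comp hh⟩

theorem Creative.reparam (hc : Creative n Φ) (hΦ : SmoothTriple n Φ)
    {h : (Fin n → ℝ) → Fin n → ℝ} (hh : ContDiff ℝ (⊤ : ℕ∞) h) : Creative n (reparam Φ h) := by
  rw [creative_iff_fderiv_packTriple_mem_contactPlane hΦ] at hc
  rw [creative_iff_fderiv_packTriple_mem_contactPlane (hΦ.reparam hh)]
  intro x v
  change fderiv ℝ (packTriple n Φ ∘ h) x v ∈ contactPlane (packTriple n Φ (h x))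
  rw [fderiv_comp x ((smoothTriple_iff_contDiff_packTriple.1 hΦ).differentiable (by simp) _)
    (hh.differentiable (by simp) x)]
  exact hc _ _

theorem exists_reparam_mem_GXset (hc : Creative n Φ) (hΦ : SmoothTriple n Φ) {x₀ : Fin n → ℝ}
    (hθ : x₀ ∈ RegPts n Φ.1) (hb : x₀ ∈ RegPts n Φ.2.2) :
    ∃ h : (Fin n → ℝ) → Fin n → ℝ, ContDiff ℝ (⊤ : ℕ∞) h ∧ (∀ x, x ∈ RegPts n h) ∧
      reparam Φ h ∈ GXset n := by
  have hopen : IsOpen (RegPts n Φ.1 ∩ RegPts n Φ.2.2) :=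
    (isOpen_regPts (hΦ.1.of_le (by simp))).inter (isOpen_regPts (hΦ.2.2.of_le (by simp)))
  obtain ⟨h, hh, hmem, hreg⟩ :=
    exists_contDiff_mem_nhds_bijective_fderiv (hopen.mem_nhds ⟨hθ, hb⟩)
  have hdh : Differentiable ℝ h := hh.differentiable (by simp)
  have hθh (x : Fin n → ℝ) : x ∈ RegPts n (reparam Φ h).1 :=
    (mem_regPts_comp_iff (hΦ.1.differentiable (by simp) _) (hdh x) (hreg x)).2 (hmem x).1
  have hbh (x : Fin n → ℝ) : x ∈ RegPts n (reparam Φ h).2.2 :=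
    (mem_regPts_comp_iff (hΦ.2.2.differentiable (by simp) _) (hdh x) (hreg x)).2 (hmem x).2
  refine ⟨h, hh, hreg, hΦ.reparam hh, hc.reparam hΦ hh, ?_, ?_⟩
  · exact dense_univ.mono fun x _ => hθh x
  · exact dense_univ.mono fun x _ => hbh x

theorem regPts_nonempty_of_reparam_mem_GXset (hΦ : SmoothTriple n Φ)
    {h : (Fin n → ℝ) → Fin n → ℝ} (hh : ContDiff ℝ (⊤ : ℕ∞) h) (hreg : ∀ x, x ∈ RegPts n h)
    (hmem : reparam Φ h ∈ GXset n) : (RegPts n Φ.1).Nonempty ∧ (RegPts n Φ.2.2).Nonempty := by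
  have hdh : Differentiable ℝ h := hh.differentiable (by simp)
  obtain ⟨x, hx⟩ := hmem.2.2.1.nonempty
  obtain ⟨y, hy⟩ := hmem.2.2.2.nonempty
  exact ⟨⟨h x, (mem_regPts_comp_iff (hΦ.1.differentiable (by simp) _) (hdh x) (hreg x)).1 hx⟩,
    ⟨h y, (mem_regPts_comp_iff (hΦ.2.2.differentiable (by simp) _) (hdh y) (hreg y)).1 hy⟩⟩

/-- The quadratic triple through the point `p`, parametrizing at the origin the `n`-plane
`{(P v, Z ⬝ᵥ P v, Q v)}` of contact vectors at `p = (X, Y, Z)`. It satisfies the creative condition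
when `(P, Q)` is isotropic. -/
noncomputable def quadTriple (p : JetSpace n) (P Q : (Fin n → ℝ) →L[ℝ] (Fin n → ℝ)) :
    TripleMap n :=
  (fun x => p.1 + P x, fun x => p.2.1 + p.2.2 ⬝ᵥ P x + 1 / 2 * (Q x ⬝ᵥ P x), fun x => p.2.2 + Q x)

variable (p : JetSpace n) (P Q : (Fin n → ℝ) →L[ℝ] (Fin n → ℝ))

theorem smoothTriple_quadTriple : SmoothTriple n (quadTriple p P Q) := by
  simp only [SmoothTriple, quadTriple, dotProduct]
  refine ⟨?_, ?_, ?_⟩ <;> fun_prop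

theorem packTriple_quadTriple_zero : packTriple n (quadTriple p P Q) 0 = p := by
  simp [packTriple, quadTriple]

theorem fderiv_quadTriple_fst (x : Fin n → ℝ) : fderiv ℝ (quadTriple p P Q).1 x = P := by
  simp [quadTriple]

theorem fderiv_quadTriple_snd_snd (x : Fin n → ℝ) : fderiv ℝ (quadTriple p P Q).2.2 x = Q := by
  simp [quadTriple]

theorem fderiv_quadTriple_snd_fst (x v : Fin n → ℝ) : fderiv ℝ (quadTriple p P Q).2.1 x v
    = p.2.2 ⬝ᵥ P v + 1 / 2 * (Q v ⬝ᵥ P x + Q x ⬝ᵥ P v) := by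
  have hlin : DifferentiableAt ℝ (fun y => p.2.2 ⬝ᵥ P y) x := by
    unfold dotProduct
    fun_prop
  have hquad : DifferentiableAt ℝ (fun y => Q y ⬝ᵥ P y) x := by
    unfold dotProduct
    fun_prop
  simp only [quadTriple]
  rw [fderiv_fun_add (hlin.const_add _) (hquad.const_mul _), fderiv_const_add,
    fderiv_const_mul hquad, _root_.add_apply, _root_.smul_apply,
    fderiv_dotProduct_apply (differentiableAt_const _) P.differentiableAt,
    fderiv_dotProduct_apply Q.differentiableAt P.differentiableAt]
  simp

variable {P Q}

theorem creative_quadTriple (hPQ : ∀ u v, Q u ⬝ᵥ P v = Q v ⬝ᵥ P u) :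
    Creative n (quadTriple p P Q) := by
  rw [creative_iff_fderiv_eq_dotProduct (smoothTriple_quadTriple p P Q)]
  intro x v
  rw [fderiv_quadTriple_fst, fderiv_quadTriple_snd_fst, hPQ v x]
  simp only [quadTriple, add_dotProduct]
  ring

theorem quadTriple_mem_GXset (hPQ : ∀ u v, Q u ⬝ᵥ P v = Q v ⬝ᵥ P u)
    (hP : Function.Bijective P) (hQ : Function.Bijective Q) : quadTriple p P Q ∈ GXset n := by
  refine ⟨smoothTriple_quadTriple p P Q, creative_quadTriple p hPQ, ?_, ?_⟩
  · simp only [RegPts, fderiv_quadTriple_fst, hP, Set.ofPred_true, dense_univ]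
  · simp only [RegPts, fderiv_quadTriple_snd_snd, hQ, Set.ofPred_true, dense_univ]

end Legendrian

section Transform

variable {n : ℕ} {F : JetSpace n → JetSpace n}

/-- The transform `𝒯(Φ) = F ∘ Φ` induced by `F`. -/
def transform (F : JetSpace n → JetSpace n) (Φ : TripleMap n) : TripleMap n :=
  unpackTriple n (F ∘ packTriple n Φ)

theorem packTriple_transform (Φ : TripleMap n) :
    packTriple n (transform F Φ) = F ∘ packTriple n Φ := rfl

theorem SmoothTriple.transform {Φ : TripleMap n} (h : SmoothTriple n Φ)
    (hF : ContDiff ℝ (⊤ : ℕ∞) F) : SmoothTriple n (transform F Φ) :=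
  smoothTriple_iff_contDiff_packTriple.2 (hF.comp (smoothTriple_iff_contDiff_packTriple.1 h))

theorem fderiv_packTriple_transform {Φ : TripleMap n} (hc : Creative n Φ) (h : SmoothTriple n Φ)
    (hF : Differentiable ℝ F) (x v : Fin n → ℝ) :
    fderiv ℝ (packTriple n (transform F Φ)) x v = fderiv ℝ F (packTriple n Φ x)
      (contactLift (packTriple n Φ x) (fderiv ℝ Φ.1 x v, fderiv ℝ Φ.2.2 x v)) := by
  have hΦ := (smoothTriple_iff_contDiff_packTriple.1 h).differentiable (by simp)
  rw [← hc.fderiv_packTriple_eq_contactLift h, packTriple_transform, fderiv_comp x (hF _) (hΦ x),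
    ContinuousLinearMap.comp_apply]

theorem contactFDeriv_fderiv {Φ : TripleMap n} (hc : Creative n Φ) (h : SmoothTriple n Φ)
    (hF : ContDiff ℝ (⊤ : ℕ∞) F) (x v : Fin n → ℝ) :
    contactFDeriv F (packTriple n Φ x) (fderiv ℝ Φ.1 x v, fderiv ℝ Φ.2.2 x v)
      = (fderiv ℝ (transform F Φ).1 x v, fderiv ℝ (transform F Φ).2.2 x v) := by
  rw [contactFDeriv_apply, ← fderiv_packTriple_transform hc h (hF.differentiable (by simp)),
    fderiv_packTriple_apply (h.transform hF)]

theorem Creative.transform {Φ : TripleMap n} (hc : Creative n Φ) (h : SmoothTriple n Φ)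
    (hF : ContDiff ℝ (⊤ : ℕ∞) F) (hcontact : IsContact F) : Creative n (transform F Φ) := by
  rw [creative_iff_fderiv_packTriple_mem_contactPlane (h.transform hF)]
  intro x v
  rw [fderiv_packTriple_transform hc h (hF.differentiable (by simp))]
  exact hcontact _ _ (contactLift_mem_contactPlane _ _)

/-- `F` is a smooth map whose transform is an involution of `GX`. -/
structure IsGXInvolution (F : JetSpace n → JetSpace n) : Prop where
  contDiff : ContDiff ℝ (⊤ : ℕ∞) F
  transform_mem : ∀ Φ ∈ GXset n, transform F Φ ∈ GXset n
  transform_transform : ∀ Φ ∈ GXset n, transform F (transform F Φ) = Φ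

namespace IsGXInvolution

theorem involutive (hF : IsGXInvolution F) : Function.Involutive F := fun p => by
  have hmem : quadTriple p (.id ℝ _) (.id ℝ _) ∈ GXset n :=
    quadTriple_mem_GXset p (fun u v => dotProduct_comm u v) Function.bijective_id
      Function.bijective_id
  have h : F (F (packTriple n (quadTriple p (.id ℝ _) (.id ℝ _)) 0)) = _ :=
    congrArg (fun Φ => packTriple n Φ 0) (hF.transform_transform _ hmem)
  rwa [packTriple_quadTriple_zero] at h

theorem differentiable (hF : IsGXInvolution F) : Differentiable ℝ F :=
  hF.contDiff.differentiable (by simp)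

/-- The contact hyperplane is spanned by the graphs of `Z = X` and `Z = -X`, which are tangent to
elements of `GX`. -/
theorem isContact (hF : IsGXInvolution F) : IsContact F := by
  intro p d hd
  have hgraph (S : (Fin n → ℝ) →L[ℝ] (Fin n → ℝ)) (hS : ∀ u v, S u ⬝ᵥ v = S v ⬝ᵥ u)
      (hbij : Function.Bijective S) (a : Fin n → ℝ) :
      fderiv ℝ F p (contactLift p (a, S a)) ∈ contactPlane (F p) := by
    have hmem : quadTriple p (.id ℝ _) S ∈ GXset n :=
      quadTriple_mem_GXset p hS Function.bijective_id hbij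
    have hT := hF.transform_mem _ hmem
    have h := (creative_iff_fderiv_packTriple_mem_contactPlane hT.1).1 hT.2.1 0 a
    rw [fderiv_packTriple_transform hmem.2.1 hmem.1 hF.differentiable, fderiv_quadTriple_fst,
      fderiv_quadTriple_snd_snd, packTriple_transform, Function.comp_apply,
      packTriple_quadTriple_zero] at h
    exact h
  have hpos := hgraph (.id ℝ _) (fun u v => dotProduct_comm u v) Function.bijective_id
    ((1 / 2 : ℝ) • (d.1 + d.2.2))
  have hneg := hgraph (-.id ℝ _) (fun u v => by simp [dotProduct_comm u v])
    (Equiv.neg _).bijective ((1 / 2 : ℝ) • (d.1 - d.2.2))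
  have hsplit : (((1 / 2 : ℝ) • (d.1 + d.2.2), (1 / 2 : ℝ) • (d.1 + d.2.2)) +
      ((1 / 2 : ℝ) • (d.1 - d.2.2), -((1 / 2 : ℝ) • (d.1 - d.2.2)))) = (d.1, d.2.2) :=
    Prod.ext (by simp only [Prod.fst_add]; module) (by simp only [Prod.snd_add]; module)
  rw [← contactLift_of_mem_contactPlane hd, ← hsplit, map_add, map_add]
  exact add_mem hpos hneg

theorem contactFDeriv_contactFDeriv (hF : IsGXInvolution F) (p : JetSpace n)
    (c : (Fin n → ℝ) × (Fin n → ℝ)) : contactFDeriv F (F p) (contactFDeriv F p c) = c :=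
  hF.isContact.contactFDeriv_contactFDeriv hF.involutive hF.differentiable p c

theorem contactFDeriv_eq_zero_iff (hF : IsGXInvolution F) {p : JetSpace n}
    {c : (Fin n → ℝ) × (Fin n → ℝ)} : contactFDeriv F p c = 0 ↔ c = 0 :=
  ⟨fun h => by rw [← hF.contactFDeriv_contactFDeriv p c, h, map_zero], fun h => by
    rw [h, map_zero]⟩

/-- Regularity at one point is inherited from the image by `F`: reparametrize the image near that
point so that it lies in `GX`, and apply `F` again. -/
theorem bijective_of_contactFDeriv_eq (hF : IsGXInvolution F) {p : JetSpace n}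
    {P Q P' Q' : (Fin n → ℝ) →L[ℝ] (Fin n → ℝ)} (hPQ : ∀ u v, Q u ⬝ᵥ P v = Q v ⬝ᵥ P u)
    (heq : ∀ v, contactFDeriv F p (P v, Q v) = (P' v, Q' v))
    (hP' : Function.Bijective P') (hQ' : Function.Bijective Q') :
    Function.Bijective P ∧ Function.Bijective Q := by
  let Ψ := quadTriple p P Q
  have hΨ : SmoothTriple n Ψ := smoothTriple_quadTriple p P Q
  have hΨc : Creative n Ψ := creative_quadTriple p hPQ
  have hderiv (v : Fin n → ℝ) :
      (fderiv ℝ (transform F Ψ).1 0 v, fderiv ℝ (transform F Ψ).2.2 0 v) = (P' v, Q' v) := by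
    rw [← contactFDeriv_fderiv hΨc hΨ hF.contDiff, packTriple_quadTriple_zero,
      fderiv_quadTriple_fst, fderiv_quadTriple_snd_snd, heq]
  have hθ : fderiv ℝ (transform F Ψ).1 0 = P' := by
    ext1 v
    exact congrArg Prod.fst (hderiv v)
  have hb : fderiv ℝ (transform F Ψ).2.2 0 = Q' := by
    ext1 v
    exact congrArg Prod.snd (hderiv v)
  obtain ⟨h, hh, hreg, hmem⟩ := exists_reparam_mem_GXset (x₀ := 0)
    (hΨc.transform hΨ hF.contDiff hF.isContact) (hΨ.transform hF.contDiff)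
    (show Function.Bijective _ by rwa [hθ]) (show Function.Bijective _ by rwa [hb])
  have hback : transform F (reparam (transform F Ψ) h) = reparam Ψ h := by
    simp only [transform, reparam, packTriple, unpackTriple, Function.comp_def, Prod.mk.eta,
      hF.involutive _]
  have hΨh : reparam Ψ h ∈ GXset n := hback ▸ hF.transform_mem _ hmem
  obtain ⟨⟨x, hx⟩, ⟨y, hy⟩⟩ := regPts_nonempty_of_reparam_mem_GXset hΨ hh hreg hΨh
  exact ⟨fderiv_quadTriple_fst p P Q x ▸ hx, fderiv_quadTriple_snd_snd p P Q y ▸ hy⟩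

/-- Otherwise the image would be tangent to the graph of a symmetric isomorphism, whose preimage
by `F` is transverse to the horizontal and vertical directions. -/
theorem contactFDeriv_fst_eq_zero_or_snd_eq_zero (hF : IsGXInvolution F) (p : JetSpace n)
    {c : (Fin n → ℝ) × (Fin n → ℝ)} (hc : c.1 = 0 ∨ c.2 = 0) :
    (contactFDeriv F p c).1 = 0 ∨ (contactFDeriv F p c).2 = 0 := by
  by_contra! hne
  obtain ⟨S, hS, hSbij, hSu⟩ := exists_dotProduct_symmetric_apply_eq hne.1 hne.2
  let Φ := quadTriple (F p) (.id ℝ _) S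
  have hΦ : Φ ∈ GXset n := quadTriple_mem_GXset (F p) hS Function.bijective_id hSbij
  have hTΦ := hF.transform_mem _ hΦ
  set P := fderiv ℝ (transform F Φ).1 0
  set Q := fderiv ℝ (transform F Φ).2.2 0
  have himage (x : Fin n → ℝ) : contactFDeriv F (F p) (x, S x) = (P x, Q x) := by
    have h := contactFDeriv_fderiv hΦ.2.1 hΦ.1 hF.contDiff 0 x
    rwa [packTriple_quadTriple_zero, fderiv_quadTriple_fst, fderiv_quadTriple_snd_snd] at h
  have hpreimage (x : Fin n → ℝ) : contactFDeriv F p (P x, Q x) = (x, S x) := by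
    have h := hF.contactFDeriv_contactFDeriv (F p) (x, S x)
    rwa [hF.involutive p, himage] at h
  obtain ⟨hP, hQ⟩ := hF.bijective_of_contactFDeriv_eq
    (hTΦ.2.1.fderiv_dotProduct_fderiv_comm hTΦ.1 0) (P' := .id ℝ _) (Q' := S) hpreimage
    Function.bijective_id hSbij
  set u := (contactFDeriv F p c).1
  have hcu : (P u, Q u) = c := by
    rw [← himage, hSu]
    exact hF.contactFDeriv_contactFDeriv p c
  refine hne.1 ?_
  rcases hc with h | h
  · exact hP.1 ((congrArg Prod.fst hcu).trans (h.trans (map_zero _).symm))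
  · exact hQ.1 ((congrArg Prod.snd hcu).trans (h.trans (map_zero _).symm))

theorem continuous_contactFDeriv_apply (hF : IsGXInvolution F)
    (c : (Fin n → ℝ) × (Fin n → ℝ)) : Continuous fun p => contactFDeriv F p c := by
  have hlift : Continuous fun p : JetSpace n => contactLift p c := by
    simp only [contactLift_apply, dotProduct]
    fun_prop
  have h := (hF.contDiff.continuous_fderiv (by simp)).clm_apply hlift
  exact h.fst.prodMk h.snd.snd

theorem forall_vertical_fst_eq_zero_or_forall_vertical_snd_eq_zero (hF : IsGXInvolution F) :
    (∀ p w, (contactFDeriv F p (0, w)).1 = 0) ∨ (∀ p w, (contactFDeriv F p (0, w)).2 = 0) := by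
  let A : Set (JetSpace n) := {p | ∀ w, (contactFDeriv F p (0, w)).1 = 0}
  let B : Set (JetSpace n) := {p | ∀ w, (contactFDeriv F p (0, w)).2 = 0}
  have hA : IsClosed A := by
    simp only [A, Set.ofPred_forall]
    exact isClosed_iInter fun w =>
      isClosed_eq (hF.continuous_contactFDeriv_apply _).fst continuous_const
  have hB : IsClosed B := by
    simp only [B, Set.ofPred_forall]
    exact isClosed_iInter fun w =>
      isClosed_eq (hF.continuous_contactFDeriv_apply _).snd continuous_const
  have hcover : Set.univ ⊆ A ∪ B := fun p _ => by
    let D := contactFDeriv F p ∘ₗ LinearMap.inr ℝ (Fin n → ℝ) (Fin n → ℝ)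
    refine (eq_zero_or_eq_zero_of_forall_apply_eq_zero (LinearMap.fst ℝ _ _ ∘ₗ D)
      (LinearMap.snd ℝ _ _ ∘ₗ D) fun w =>
        hF.contactFDeriv_fst_eq_zero_or_snd_eq_zero p (.inl rfl)).imp ?_ ?_ <;>
      exact DFunLike.congr_fun
  rcases subsingleton_or_nontrivial (Fin n → ℝ) with _ | _
  · exact .inl fun p w => Subsingleton.elim _ _
  have hdisj : Set.univ ∩ (A ∩ B) = ∅ := by
    refine Set.eq_empty_of_forall_notMem fun p ⟨_, hpA, hpB⟩ => ?_
    obtain ⟨w, hw⟩ := exists_ne (0 : Fin n → ℝ)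
    exact hw (congrArg Prod.snd (hF.contactFDeriv_eq_zero_iff.1 (Prod.ext (hpA w) (hpB w))))
  exact (isPreconnected_iff_subset_of_disjoint_closed.1 isPreconnected_univ A B hA hB hcover
    hdisj).imp (fun h p => h (Set.mem_univ p)) (fun h p => h (Set.mem_univ p))

theorem contactFDeriv_horizontal_snd_eq_zero (hF : IsGXInvolution F)
    (hvert : ∀ p w, (contactFDeriv F p (0, w)).1 = 0) (p : JetSpace n) (v : Fin n → ℝ) :
    (contactFDeriv F p (v, 0)).2 = 0 := by
  refine (hF.contactFDeriv_fst_eq_zero_or_snd_eq_zero p (.inr rfl)).elim (fun h => ?_) id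
  have hback : contactFDeriv F (F p) (0, (contactFDeriv F p (v, 0)).2) = (v, 0) := by
    have hvertical : (0, (contactFDeriv F p (v, 0)).2) = contactFDeriv F p (v, 0) :=
      Prod.ext h.symm rfl
    rw [hvertical, hF.contactFDeriv_contactFDeriv]
  have hv : v = 0 := by simpa only [hback] using hvert (F p) (contactFDeriv F p (v, 0)).2
  rw [hv, Prod.mk_zero_zero, map_zero, Prod.snd_zero]

theorem contactFDeriv_horizontal_fst_eq_zero (hF : IsGXInvolution F)
    (hvert : ∀ p w, (contactFDeriv F p (0, w)).2 = 0) (p : JetSpace n) (v : Fin n → ℝ) :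
    (contactFDeriv F p (v, 0)).1 = 0 := by
  let A : (Fin n → ℝ) →ₗ[ℝ] (Fin n → ℝ) :=
    LinearMap.fst ℝ _ _ ∘ₗ contactFDeriv F (F p) ∘ₗ LinearMap.inr ℝ _ _
  have hA : Function.Injective A := (injective_iff_map_eq_zero A).2 fun w hw =>
    congrArg Prod.snd (hF.contactFDeriv_eq_zero_iff.1 (Prod.ext hw (hvert (F p) w)))
  obtain ⟨w, hw⟩ := LinearMap.injective_iff_surjective.1 hA v
  have hvw : contactFDeriv F (F p) (0, w) = (v, 0) := Prod.ext hw (hvert (F p) w)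
  have hback := hF.contactFDeriv_contactFDeriv (F p) (0, w)
  rw [hF.involutive p, hvw] at hback
  rw [hback]

theorem fst_eq_fst_and_snd_snd_eq_snd_snd (hF : IsGXInvolution F)
    (hvert : ∀ p w, (contactFDeriv F p (0, w)).1 = 0)
    (hdiag : ∀ x : Fin n → ℝ, F (x, 1 / 2 * (x ⬝ᵥ x), x) = (x, 1 / 2 * (x ⬝ᵥ x), x))
    (p : JetSpace n) : (F p).1 = p.1 ∧ (F p).2.2 = p.2.2 := by
  have hhor := hF.contactFDeriv_horizontal_snd_eq_zero hvert
  refine ⟨eq_fst_of_fderiv_vertical_eq_zero hF.differentiable.fst (fun q w => ?_)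
    (fun q v hv => ?_) (fun x => by rw [hdiag]) p,
    eq_snd_snd_of_fderiv_horizontal_eq_zero hF.differentiable.snd.snd (fun q v => ?_)
    (fun q w hw => ?_) (fun x => by rw [hdiag]) p⟩
  · rw [fderiv_fst_contactLift hF.differentiable, hvert]
  · rw [fderiv_fst_contactLift hF.differentiable] at hv
    exact congrArg Prod.fst (hF.contactFDeriv_eq_zero_iff.1 (Prod.ext hv (hhor q v)))
  · rw [fderiv_snd_snd_contactLift hF.differentiable, hhor]
  · rw [fderiv_snd_snd_contactLift hF.differentiable] at hw
    exact congrArg Prod.snd (hF.contactFDeriv_eq_zero_iff.1 (Prod.ext (hvert q w) hw))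

theorem fst_eq_snd_snd_and_snd_snd_eq_fst (hF : IsGXInvolution F)
    (hvert : ∀ p w, (contactFDeriv F p (0, w)).2 = 0)
    (hdiag : ∀ x : Fin n → ℝ, F (x, 1 / 2 * (x ⬝ᵥ x), x) = (x, 1 / 2 * (x ⬝ᵥ x), x))
    (p : JetSpace n) : (F p).1 = p.2.2 ∧ (F p).2.2 = p.1 := by
  have hfst : ∀ q, (F q).1 = q.2.2 :=
    eq_snd_snd_of_fderiv_horizontal_eq_zero hF.differentiable.fst
      (fun q v => by rw [fderiv_fst_contactLift hF.differentiable,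
        hF.contactFDeriv_horizontal_fst_eq_zero hvert])
      (fun q w hw => by
        rw [fderiv_fst_contactLift hF.differentiable] at hw
        exact congrArg Prod.snd (hF.contactFDeriv_eq_zero_iff.1 (Prod.ext hw (hvert q w))))
      (fun x => by rw [hdiag])
  exact ⟨hfst p, by rw [← hfst (F p), hF.involutive p]⟩

end IsGXInvolution

end Transform

theorem lemma_3_1_general {n : ℕ}
    {F : (Fin n → ℝ) × ℝ × (Fin n → ℝ) → (Fin n → ℝ) × ℝ × (Fin n → ℝ)}
    (hF : ContDiff ℝ (⊤ : ℕ∞) F) {T : TripleMap n → TripleMap n}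
    (hTF : ∀ Φ ∈ GXset n, T Φ = unpackTriple n (F ∘ packTriple n Φ))
    (hmap : ∀ Φ ∈ GXset n, T Φ ∈ GXset n) (hinv : ∀ Φ ∈ GXset n, T (T Φ) = Φ)
    (hfix : ∀ Φ ∈ GXset n, Φ ∈ GYset n → T Φ = Φ) :
    (∀ p, (F p).1 = p.1 ∧ (F p).2.2 = p.2.2) ∨ (∀ p, (F p).1 = p.2.2 ∧ (F p).2.2 = p.1) := by
  have hGX : IsGXInvolution F :=
    ⟨hF, fun Φ hΦ => (hTF Φ hΦ).subst (motive := (· ∈ GXset n)) (hmap Φ hΦ), fun Φ hΦ =>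
      (congrArg (transform F) (hTF Φ hΦ)).symm.trans ((hTF _ (hmap Φ hΦ)).symm.trans (hinv Φ hΦ))⟩
  have hdiag (x : Fin n → ℝ) : F (x, 1 / 2 * (x ⬝ᵥ x), x) = (x, 1 / 2 * (x ⬝ᵥ x), x) := by
    have hmem : quadTriple 0 (.id ℝ _) (.id ℝ _) ∈ GXset n :=
      quadTriple_mem_GXset 0 (fun u v => dotProduct_comm u v) Function.bijective_id
        Function.bijective_id
    have hGY : quadTriple 0 (.id ℝ _) (.id ℝ _) ∈ GYset n :=
      ⟨_, hmem.1.1, hmem.2.2.1, by simp [quadTriple, dotProduct, sq]⟩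
    have h := (hTF _ hmem).symm.trans (hfix _ hmem hGY)
    simpa [packTriple, unpackTriple, quadTriple] using congrFun (congrArg (packTriple n) h) x
  exact hGX.forall_vertical_fst_eq_zero_or_forall_vertical_snd_eq_zero.imp
    (fun hvert => hGX.fst_eq_fst_and_snd_snd_eq_snd_snd hvert hdiag)
    (fun hvert => hGX.fst_eq_snd_snd_and_snd_snd_eq_fst hvert hdiag)

/-- **Lemma 3.1**: if the transform `𝒯(Φ) = F ∘ Φ` induced by a real-analytic map
`F = (F₁, F₂, F₃) : ℝ^{2n+1} → ℝ^{2n+1}` maps `GX` into `GX`, is an involution on `GX`,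
fixes every element of `GY` and moves every element of `GX ∖ GY`, then for each
`i ∈ {1, …, n}` there are constants `pᵢ, pᵢ', qᵢ, qᵢ'` with
`F₁ᵢ(X, Y, Z) = pᵢXᵢ + pᵢ'Zᵢ` and `F₃ᵢ(X, Y, Z) = qᵢXᵢ + qᵢ'Zᵢ` on all of `ℝ^{2n+1}`. -/
theorem lemma_3_1 (n : ℕ) (hn : 1 ≤ n)
    (F : (Fin n → ℝ) × ℝ × (Fin n → ℝ) → (Fin n → ℝ) × ℝ × (Fin n → ℝ))
    (hF : AnalyticOnNhd ℝ F Set.univ)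
    (T : TripleMap n → TripleMap n)
    (hTF : ∀ Φ ∈ GXset n, T Φ = unpackTriple n (F ∘ packTriple n Φ))
    (hmap : ∀ Φ ∈ GXset n, T Φ ∈ GXset n)
    (hinv : ∀ Φ ∈ GXset n, T (T Φ) = Φ)
    (hfix : ∀ Φ ∈ GXset n, (Φ ∈ GYset n → T Φ = Φ) ∧ (Φ ∉ GYset n → T Φ ≠ Φ)) :
    ∀ i : Fin n, ∃ p p' q q' : ℝ, ∀ w : (Fin n → ℝ) × ℝ × (Fin n → ℝ),
      (F w).1 i = p * w.1 i + p' * w.2.2 i ∧ (F w).2.2 i = q * w.1 i + q' * w.2.2 i := by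
  intro i
  have hfixGY : ∀ Φ ∈ GXset n, Φ ∈ GYset n → T Φ = Φ := fun Φ hΦ => (hfix Φ hΦ).1
  rcases lemma_3_1_general hF.contDiff hTF hmap hinv hfixGY with h | h
  · exact ⟨1, 0, 0, 1, fun w => by simp [h w]⟩
  · exact ⟨0, 1, 1, 0, fun w => by simp [h w]⟩
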